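/- Let S be a finite nonempty set, let (p_s)_{s∈S} be a probability vector with 0 < p_s ≤ 1/2 for all s, and for each s let ρ_s be an n×n density matrix (positive semidefinite complex matrix with trace 1). Let ρ = ∑_s p_s ρ_s. Let (E_e)_{e∈F} be any POVM on ℂⁿ, and set p(e|s) = Tr(E_e ρ_s) and p(e) = ∑_s p_s p(e|s). Then the mutual information I(S;E) = ∑_{s,e} p_s p(e|s) · log( p(e|s) / p(e) ) satisfies I(S;E) ≤ ∑_s p_s log(1/p_s) · ‖ρ_s - ρ‖₁, where ‖·‖₁ denotes the trace norm (sum of absolute values of eigenvalues of a Hermitian matrix). -/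

import Mathlib

/-!
Write `q_s(e) = Tr(E_e ρ_s)`, `q = ∑ p_s q_s`, and `r = q_s(e) / q(e) ∈ [0, 1 / p_s]`.

The inequality reduces to the scalar bound
`r log r ≤ log 2 * (r - 1) + log (1 / p) * |r - 1|` for `0 ≤ r ≤ 1 / p`, `p ≤ 1 / 2`
(`mul_log_le_affine_add_abs`). For `r ≤ 1` the left side is nonpositive and the right side
nonnegative; for `r ≥ 1` it is the chord bound for the convex function `r log r` on `[1, 1 / p]`,
together with `log x ≤ log 2 * (x - 1)` for `x ≥ 2`. After multiplying by `p_s q(e)` and summing,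
the `log 2` terms cancel because `∑_s p_s q_s = q`, leaving
`I(S;E) ≤ ∑_s p_s log (1 / p_s) ∑_e |q_s(e) - q(e)|`.

Finally `∑_e |Tr(E_e A)| ≤ ‖A‖₁` for Hermitian `A` (`sum_abs_trace_le_traceNorm`): in an eigenbasis
of `A`, `Tr(E A) = ∑_i λ_i w_i(E)` with `w_i(E) ≥ 0`, and `∑_e w_i(E_e) = 1`.
-/

open scoped BigOperators ComplexOrder

/-- The trace norm of a matrix: for a Hermitian matrix it is the sum of the
absolute values of its (real) eigenvalues; we set it to `0` otherwise. -/
noncomputable def traceNorm {ι : Type*} [Fintype ι] [DecidableEq ι]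
    (A : Matrix ι ι ℂ) : ℝ :=
  letI := Classical.dec A.IsHermitian
  if h : A.IsHermitian then ∑ i, |h.eigenvalues i| else 0

lemma log_le_log_two_mul {x : ℝ} (hx : 2 ≤ x) : Real.log x ≤ Real.log 2 * (x - 1) := by
  have h1 : Real.log (x / 2) ≤ x / 2 - 1 := Real.log_le_sub_one_of_pos (by linarith)
  rw [Real.log_div (by linarith) (by norm_num)] at h1
  nlinarith [Real.log_two_gt_d9]

/-- The multiple `log 2 * (r - 1)` of the mean-zero quantity `r - 1` is what lets the coefficient
of `|r - 1|` be `log (1 / p)` with no extra constant. -/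
lemma mul_log_le_affine_add_abs {p r : ℝ} (hp : 0 < p) (hp2 : p ≤ 1 / 2) (hr : 0 ≤ r)
    (hrp : r ≤ 1 / p) :
    r * Real.log r ≤ Real.log 2 * (r - 1) + Real.log (1 / p) * |r - 1| := by
  have hx : 2 ≤ 1 / p := by rw [le_div_iff₀ hp]; linarith
  generalize 1 / p = x at *
  have hlx : Real.log 2 ≤ Real.log x := Real.log_le_log (by norm_num) hx
  rcases le_total r 1 with h | h
  · rw [abs_of_nonpos (by linarith)]
    have := mul_nonpos_of_nonneg_of_nonpos hr (Real.log_nonpos hr h)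
    nlinarith
  · rw [abs_of_nonneg (by linarith)]
    have hx1 : 0 < x - 1 := by linarith
    -- `r` is the convex combination of `1` and `x` with weights `(x - r) / (x - 1)` and
    -- `(r - 1) / (x - 1)`.
    have hc := Real.convexOn_mul_log.2 (Set.mem_Ici.2 zero_le_one)
      (Set.mem_Ici.2 (by linarith : 0 ≤ x))
      (div_nonneg (by linarith : 0 ≤ x - r) hx1.le)
      (div_nonneg (by linarith : 0 ≤ r - 1) hx1.le)
      (by field_simp; ring)
    have he : ((x - r) / (x - 1)) • (1 : ℝ) + ((r - 1) / (x - 1)) • x = r := by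
      simp only [smul_eq_mul]; field_simp; ring
    rw [he] at hc
    simp only [smul_eq_mul, Real.log_one, mul_zero, zero_add] at hc
    have hk := log_le_log_two_mul hx
    have hs : x * Real.log x ≤ (Real.log 2 + Real.log x) * (x - 1) := by nlinarith
    calc r * Real.log r ≤ (r - 1) / (x - 1) * (x * Real.log x) := hc
      _ ≤ (r - 1) / (x - 1) * ((Real.log 2 + Real.log x) * (x - 1)) :=
        mul_le_mul_of_nonneg_left hs (div_nonneg (by linarith) hx1.le)
      _ = Real.log 2 * (r - 1) + Real.log x * (r - 1) := by field_simp

/-- The homogeneous form of `mul_log_le_affine_add_abs`, with `r = a / q`; it also covers `q = 0`,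
where `a = 0`. -/
lemma mul_log_div_le {p a q : ℝ} (hp : 0 < p) (hp2 : p ≤ 1 / 2) (ha : 0 ≤ a) (hpa : p * a ≤ q) :
    a * Real.log (a / q) ≤ Real.log 2 * (a - q) + Real.log (1 / p) * |a - q| := by
  have hq : 0 ≤ q := (mul_nonneg hp.le ha).trans hpa
  rcases hq.eq_or_lt with rfl | hq
  · have : a = 0 := by nlinarith
    simp [this]
  · have h := mul_log_le_affine_add_abs hp hp2 (div_nonneg ha hq.le) (r := a / q)
      (by rw [div_le_div_iff₀ hq hp]; linarith)
    have h' := mul_le_mul_of_nonneg_left h hq.le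
    have e1 : a / q - 1 = (a - q) / q := by field_simp
    rw [e1, abs_div, abs_of_pos hq] at h'
    calc a * Real.log (a / q) = q * (a / q * Real.log (a / q)) := by field_simp
      _ ≤ _ := h'
      _ = _ := by field_simp

/-- The weight `⟨u_i, E u_i⟩` of `E` on the `i`-th eigenvector `u_i` of the Hermitian matrix `A`. -/
noncomputable def eigenWeight {n : ℕ} {A : Matrix (Fin n) (Fin n) ℂ} (hA : A.IsHermitian)
    (E : Matrix (Fin n) (Fin n) ℂ) (i : Fin n) : ℝ :=
  (((hA.eigenvectorUnitary : Matrix (Fin n) (Fin n) ℂ).conjTranspose * E *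
    (hA.eigenvectorUnitary : Matrix (Fin n) (Fin n) ℂ)) i i).re

lemma eigenWeight_nonneg {n : ℕ} {A : Matrix (Fin n) (Fin n) ℂ} (hA : A.IsHermitian)
    {E : Matrix (Fin n) (Fin n) ℂ} (hE : E.PosSemidef) (i : Fin n) : 0 ≤ eigenWeight hA E i := by
  have h := (hE.conjTranspose_mul_mul_same
    (hA.eigenvectorUnitary : Matrix (Fin n) (Fin n) ℂ)).diag_nonneg (i := i)
  exact (Complex.le_def.1 h).1

lemma sum_eigenWeight {n : ℕ} {F : Type*} [Fintype F] {A : Matrix (Fin n) (Fin n) ℂ}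
    (hA : A.IsHermitian) (E : F → Matrix (Fin n) (Fin n) ℂ) (hEsum : ∑ e, E e = 1) (i : Fin n) :
    ∑ e, eigenWeight hA (E e) i = 1 := by
  unfold eigenWeight
  rw [← Complex.re_sum, ← Matrix.sum_apply, ← Finset.sum_mul, ← Finset.mul_sum, hEsum, mul_one]
  have : (hA.eigenvectorUnitary : Matrix (Fin n) (Fin n) ℂ).conjTranspose *
      (hA.eigenvectorUnitary : Matrix (Fin n) (Fin n) ℂ) = 1 :=
    Unitary.coe_star_mul_self hA.eigenvectorUnitary
  rw [this]
  simp

lemma re_trace_mul_eq {n : ℕ} {A : Matrix (Fin n) (Fin n) ℂ} (hA : A.IsHermitian)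
    (E : Matrix (Fin n) (Fin n) ℂ) :
    (E * A).trace.re = ∑ i, hA.eigenvalues i * eigenWeight hA E i := by
  have hs : A = (hA.eigenvectorUnitary : Matrix (Fin n) (Fin n) ℂ) *
      Matrix.diagonal (fun i => (hA.eigenvalues i : ℂ)) *
      (hA.eigenvectorUnitary : Matrix (Fin n) (Fin n) ℂ).conjTranspose := by
    conv_lhs => rw [hA.spectral_theorem]
    rfl
  unfold eigenWeight
  set U := (hA.eigenvectorUnitary : Matrix (Fin n) (Fin n) ℂ)
  have : (E * A).trace =
      (U.conjTranspose * E * U * Matrix.diagonal (fun i => (hA.eigenvalues i : ℂ))).trace := by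
    conv_lhs => rw [hs]
    rw [← Matrix.mul_assoc, Matrix.trace_mul_comm]
    simp only [Matrix.mul_assoc]
  rw [this, Matrix.trace, Complex.re_sum]
  refine Finset.sum_congr rfl fun i _ => ?_
  rw [Matrix.diag_apply, Matrix.mul_diagonal, Complex.re_mul_ofReal, mul_comm]

lemma re_trace_mul_nonneg {n : ℕ} {A E : Matrix (Fin n) (Fin n) ℂ} (hA : A.PosSemidef)
    (hE : E.PosSemidef) : 0 ≤ (E * A).trace.re := by
  rw [re_trace_mul_eq hA.isHermitian]
  exact Finset.sum_nonneg fun i _ =>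
    mul_nonneg (hA.eigenvalues_nonneg i) (eigenWeight_nonneg _ hE i)

/-- Measuring with a POVM cannot increase the trace norm. -/
lemma sum_abs_trace_le_traceNorm {n : ℕ} {F : Type*} [Fintype F] {A : Matrix (Fin n) (Fin n) ℂ}
    (hA : A.IsHermitian) (E : F → Matrix (Fin n) (Fin n) ℂ) (hE : ∀ e, (E e).PosSemidef)
    (hEsum : ∑ e, E e = 1) : ∑ e, |(E e * A).trace.re| ≤ traceNorm A := by
  have ht : traceNorm A = ∑ i, |hA.eigenvalues i| := by simp [traceNorm, hA]
  rw [ht]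
  calc ∑ e, |(E e * A).trace.re|
      ≤ ∑ e, ∑ i, |hA.eigenvalues i| * eigenWeight hA (E e) i := by
        refine Finset.sum_le_sum fun e _ => ?_
        rw [re_trace_mul_eq hA]
        refine (Finset.abs_sum_le_sum_abs _ _).trans (Finset.sum_le_sum fun i _ => ?_)
        rw [abs_mul, abs_of_nonneg (eigenWeight_nonneg hA (hE e) i)]
    _ = ∑ i, |hA.eigenvalues i| := by
        rw [Finset.sum_comm]
        refine Finset.sum_congr rfl fun i _ => ?_
        rw [← Finset.mul_sum, sum_eigenWeight hA E hEsum, mul_one]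

/-- If a source emits density matrices `ρ_s` with probabilities
`p_s ∈ (0, 1/2]`, then for any POVM `(E_e)`, with `p(e|s) = Tr(E_e ρ_s)` and
`p(e) = ∑_s p_s p(e|s)`, the mutual information satisfies
`I(S;E) ≤ ∑_s p_s log(1/p_s) ‖ρ_s - ρ‖₁` where `ρ = ∑_s p_s ρ_s`. -/
theorem mutual_info_le_traceNorm {S : Type*} [Fintype S] [Nonempty S]
    {n : ℕ} {F : Type*} [Fintype F]
    (p : S → ℝ) (hppos : ∀ s, 0 < p s) (hphalf : ∀ s, p s ≤ 1 / 2)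
    (hpsum : ∑ s, p s = 1)
    (ρ : S → Matrix (Fin n) (Fin n) ℂ)
    (hρ : ∀ s, (ρ s).PosSemidef) (hρtr : ∀ s, (ρ s).trace = 1)
    (E : F → Matrix (Fin n) (Fin n) ℂ)
    (hE : ∀ e, (E e).PosSemidef) (hEsum : ∑ e, E e = 1) :
    ∑ s, ∑ e, p s * ((E e * ρ s).trace).re *
        Real.log (((E e * ρ s).trace).re / (∑ s', p s' * ((E e * ρ s').trace).re)) ≤
      ∑ s, p s * Real.log (1 / p s) *
        traceNorm (ρ s - ∑ s', (p s' : ℂ) • ρ s') := by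
  have hnn : ∀ e s, 0 ≤ (E e * ρ s).trace.re := fun e s => re_trace_mul_nonneg (hρ s) (hE e)
  have htr : ∀ e s, (E e * (ρ s - ∑ s', (p s' : ℂ) • ρ s')).trace.re =
      (E e * ρ s).trace.re - ∑ s', p s' * (E e * ρ s').trace.re := by
    intro e s
    simp [mul_sub, Finset.mul_sum, Matrix.trace_sum, Matrix.trace_sub, Complex.re_sum]
  have hH : ∀ s, (ρ s - ∑ s', (p s' : ℂ) • ρ s').IsHermitian := by
    intro s
    refine (hρ s).isHermitian.sub ?_
    simp only [Matrix.IsHermitian, Matrix.conjTranspose_sum, Matrix.conjTranspose_smul]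
    refine Finset.sum_congr rfl fun t _ => ?_
    rw [(hρ t).isHermitian.eq]
    simp
  have hN : ∀ s, ∑ e, |(E e * ρ s).trace.re - ∑ s', p s' * (E e * ρ s').trace.re| ≤
      traceNorm (ρ s - ∑ s', (p s' : ℂ) • ρ s') := by
    intro s
    simpa only [htr] using sum_abs_trace_le_traceNorm (hH s) E hE hEsum
  have hz : ∀ e, ∑ s, p s * ((E e * ρ s).trace.re - ∑ s', p s' * (E e * ρ s').trace.re) = 0 := by
    intro e
    simp only [mul_sub, Finset.sum_sub_distrib]
    rw [← Finset.sum_mul, hpsum, one_mul, sub_self]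
  calc _ ≤ ∑ s, ∑ e,
        (Real.log 2 * (p s * ((E e * ρ s).trace.re - ∑ s', p s' * (E e * ρ s').trace.re)) +
          p s * Real.log (1 / p s) *
            |(E e * ρ s).trace.re - ∑ s', p s' * (E e * ρ s').trace.re|) := by
        refine Finset.sum_le_sum fun s _ => Finset.sum_le_sum fun e _ => ?_
        have h := mul_log_div_le (hppos s) (hphalf s) (hnn e s)
          (Finset.single_le_sum (f := fun s' => p s' * (E e * ρ s').trace.re)
            (fun t _ => mul_nonneg (hppos t).le (hnn e t)) (Finset.mem_univ s))
        have h' := mul_le_mul_of_nonneg_left h (hppos s).le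
        linarith
    _ = ∑ s, p s * Real.log (1 / p s) *
          ∑ e, |(E e * ρ s).trace.re - ∑ s', p s' * (E e * ρ s').trace.re| := by
        simp only [Finset.sum_add_distrib]
        rw [Finset.sum_comm]
        simp only [← Finset.mul_sum, hz]
        simp
    _ ≤ _ := by
        refine Finset.sum_le_sum fun s _ => mul_le_mul_of_nonneg_left (hN s) ?_
        refine mul_nonneg (hppos s).le (Real.log_nonneg ?_)
        rw [le_div_iff₀ (hppos s)]
        linarith [hphalf s]
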